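/- arXiv:2301.05153 — 2 statements merged into one kernel-verified Lean document; each statement's English description precedes it below -/
import Mathlib

section
/- Fix i ∈ {0,…,e−1}. Let B be a block of multipartitions of n with core block C such that w(B) ≤ w(C) + K_i(C)·r and δ_i(B) ≥ 0. If λ and μ are multipartitions in B with λ > μ in the lexicographic order, then Φ_i(λ) > Φ_i(μ) in the lexicographic order; that is, Φ_i preserves the lexicographic order of multipartitions in B. -/
/-!
Combinatorial framework for multipartitions, residues, β-sets, abacus levels,
weights, hubs, core blocks and Scopes-type moves, following Fayers and the paper.
Rows and columns of Young diagrams are indexed from 0, so the node in row `b`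
and column `c` (0-based) of component `j` has residue `a j + c - b` mod `e`.
-/

open scoped Classical

namespace AK

/-- A partition, given by its (antitone, finitely supported) sequence of parts,
rows indexed from `0`. -/
structure PartitionFun : Type where
  part : ℕ → ℕ
  antitone : Antitone part
  finite_support : ∃ N, ∀ b, N ≤ b → part b = 0

/-- The node in row `b`, column `c` (0-based) belongs to the Young diagram. -/
def PartitionFun.InDiag (lam : PartitionFun) (b c : ℕ) : Prop := c < lam.part b

/-- The node `(b,c)` is removable: deleting it leaves the diagram of a partition. -/
def PartitionFun.Removable (lam : PartitionFun) (b c : ℕ) : Prop :=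
  lam.part b = c + 1 ∧ lam.part (b + 1) ≤ c

/-- The node `(b,c)` is addable: adjoining it gives the diagram of a partition. -/
def PartitionFun.Addable (lam : PartitionFun) (b c : ℕ) : Prop :=
  lam.part b = c ∧ (b = 0 ∨ lam.part b < lam.part (b - 1))

/-- An `r`-multipartition. -/
abbrev Multipartition (r : ℕ) := Fin r → PartitionFun

/-- Nodes: `(b, c, j)` with row `b`, column `c`, component `j`. -/
abbrev Node (r : ℕ) := ℕ × ℕ × Fin r

/-- The Young diagram of a multipartition, as a set of nodes. -/
def diag {r : ℕ} (lam : Multipartition r) : Set (Node r) :=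
  {x | (lam x.2.2).InDiag x.1 x.2.1}

/-- The size `n` of a multipartition of `n`. -/
noncomputable def msize {r : ℕ} (lam : Multipartition r) : ℕ :=
  Set.ncard (diag lam)

/-- `c_i(λ)`: the number of nodes of residue `i` (mod `e`). -/
noncomputable def nodeCount {r : ℕ} (e : ℕ) (a : Fin r → ℤ) (lam : Multipartition r)
    (i : ℤ) : ℕ :=
  Set.ncard {x : Node r | (lam x.2.2).InDiag x.1 x.2.1 ∧
    (a x.2.2 + (x.2.1 : ℤ) - (x.1 : ℤ)) % (e : ℤ) = i % e}

/-- Number of removable nodes of residue `i` in component `j`. -/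
noncomputable def removableCount {r : ℕ} (e : ℕ) (a : Fin r → ℤ) (lam : Multipartition r)
    (i : ℤ) (j : Fin r) : ℕ :=
  Set.ncard {p : ℕ × ℕ | (lam j).Removable p.1 p.2 ∧
    (a j + (p.2 : ℤ) - (p.1 : ℤ)) % (e : ℤ) = i % e}

/-- Number of addable nodes of residue `i` in component `j`. -/
noncomputable def addableCount {r : ℕ} (e : ℕ) (a : Fin r → ℤ) (lam : Multipartition r)
    (i : ℤ) (j : Fin r) : ℕ :=
  Set.ncard {p : ℕ × ℕ | (lam j).Addable p.1 p.2 ∧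
    (a j + (p.2 : ℤ) - (p.1 : ℤ)) % (e : ℤ) = i % e}

/-- `δ^j_i(λ)` = (removable `i`-nodes of component `j`) − (addable `i`-nodes of component `j`). -/
noncomputable def delta {r : ℕ} (e : ℕ) (a : Fin r → ℤ) (lam : Multipartition r)
    (i : ℤ) (j : Fin r) : ℤ :=
  (removableCount e a lam i j : ℤ) - (addableCount e a lam i j : ℤ)

/-- The hub `δ_i(λ) = Σ_j δ^j_i(λ)`. -/
noncomputable def hub {r : ℕ} (e : ℕ) (a : Fin r → ℤ) (lam : Multipartition r) (i : ℤ) : ℤ :=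
  ∑ j : Fin r, delta e a lam i j

/-- Two multipartitions have the same hub. -/
def SameHub {r : ℕ} (e : ℕ) (a : Fin r → ℤ) (lam mu : Multipartition r) : Prop :=
  ∀ i : ℤ, hub e a lam i = hub e a mu i

/-- `d_i(m) = min { δ^j_i(m) : 1 ≤ j ≤ r }`. -/
noncomputable def dmin {r : ℕ} (e : ℕ) (a : Fin r → ℤ) (lam : Multipartition r) (i : ℤ) : ℤ :=
  sInf {x : ℤ | ∃ j : Fin r, delta e a lam i j = x}

/-- The weight `w(λ) = Σ_j c_{a_j}(λ) − (1/2) Σ_{i∈ℤ/eℤ} (c_i(λ) − c_{i+1}(λ))²`. -/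
noncomputable def weight {r : ℕ} (e : ℕ) (a : Fin r → ℤ) (lam : Multipartition r) : ℚ :=
  (∑ j : Fin r, (nodeCount e a lam (a j) : ℚ)) -
    (1 / 2 : ℚ) * ∑ i ∈ Finset.range e,
      ((nodeCount e a lam (i : ℤ) : ℚ) - (nodeCount e a lam ((i : ℤ) + 1) : ℚ)) ^ 2

/-- The β-set `B^j = {λ_b + a_j − b : b ≥ 1}` (here with rows indexed from 0). -/
def betaSet (aj : ℤ) (lam : PartitionFun) : Set ℤ :=
  {x | ∃ b : ℕ, x = (lam.part b : ℤ) + aj - ((b : ℤ) + 1)}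

/-- A partition is an `e`-core: `β ∈ B` implies `β − e ∈ B`. -/
def IsECore (e : ℕ) (aj : ℤ) (lam : PartitionFun) : Prop :=
  ∀ x ∈ betaSet aj lam, x - (e : ℤ) ∈ betaSet aj lam

/-- A multicore: all components are `e`-cores. -/
def IsMulticore {r : ℕ} (e : ℕ) (a : Fin r → ℤ) (lam : Multipartition r) : Prop :=
  ∀ j, IsECore e (a j) (lam j)

/-- `ℓ^a_{ij}(λ)`: the level of the lowest bead on runner `i`, i.e. the largest `x`
with `x·e + i` in the β-set. -/
noncomputable def level (e : ℕ) (aj : ℤ) (lam : PartitionFun) (i : ℕ) : ℤ :=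
  sSup {x : ℤ | x * (e : ℤ) + (i : ℤ) ∈ betaSet aj lam}

/-- `γ^{jk}_i(λ) = ℓ^a_{ij}(λ) − ℓ^a_{ik}(λ)`. -/
noncomputable def gamma {r : ℕ} (e : ℕ) (a : Fin r → ℤ) (lam : Multipartition r)
    (i : ℕ) (j k : Fin r) : ℤ :=
  level e (a j) (lam j) i - level e (a k) (lam k) i

/-- `γ^{jk}_{il}(λ) = γ^{jk}_i(λ) − γ^{jk}_l(λ)`. -/
noncomputable def gammaD {r : ℕ} (e : ℕ) (a : Fin r → ℤ) (lam : Multipartition r)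
    (i l : ℕ) (j k : Fin r) : ℤ :=
  gamma e a lam i j k - gamma e a lam l j k

/-- Move a bead from runner `i` to runner `l` in the β-set `S`: replace the largest
element of `S` congruent to `i` mod `e` by the smallest integer congruent to `l`
mod `e` not in `S`. -/
noncomputable def moveBead (e : ℕ) (i l : ℕ) (S : Set ℤ) : Set ℤ :=
  insert (sInf {x : ℤ | x % (e : ℤ) = (l : ℤ) % e ∧ x ∉ S})
    (S \ {sSup {x : ℤ | x % (e : ℤ) = (i : ℤ) % e ∧ x ∈ S}})

/-- The effect of `s^{jk}_{il}` on the tuple of β-sets: move a bead from runner `i`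
to runner `l` in component `j`, and from runner `l` to runner `i` in component `k`. -/
noncomputable def swapSets {r : ℕ} (e i l : ℕ) (j k : Fin r) (S : Fin r → Set ℤ) :
    Fin r → Set ℤ :=
  Function.update (Function.update S j (moveBead e i l (S j))) k
    (moveBead e l i (Function.update S j (moveBead e i l (S j)) k))

/-- `m' = s^{jk}_{il}(m)`, expressed via β-sets. -/
def IsSwap {r : ℕ} (e : ℕ) (a : Fin r → ℤ) (i l : ℕ) (j k : Fin r)
    (m m' : Multipartition r) : Prop :=
  ∀ j', betaSet (a j') (m' j') = swapSets e i l j k (fun t => betaSet (a t) (m t)) j'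

/-- `λ` lies in a core block: its weight is minimal among the weights of all
multipartitions with the same hub. -/
def MinimalWeight {r : ℕ} (e : ℕ) (a : Fin r → ℤ) (lam : Multipartition r) : Prop :=
  ∀ mu : Multipartition r, SameHub e a lam mu → weight e a lam ≤ weight e a mu

/-- `(b_0,…,b_{e−1})` is a base tuple for `mu` with respect to the multicharge `a'`
(congruent to `a` componentwise mod `e`): each `ℓ^{a'}_{ij}(mu)` is `b i` or `b i + 1`. -/
def IsBaseTuple {r : ℕ} (e : ℕ) (a : Fin r → ℤ) (mu : Multipartition r)
    (a' : Fin r → ℤ) (b : ℕ → ℤ) : Prop :=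
  (∀ j, (e : ℤ) ∣ (a' j - a j)) ∧
    ∀ i < e, ∀ j, level e (a' j) (mu j) i = b i ∨ level e (a' j) (mu j) i = b i + 1

/-- `K_i(C)` for the core block of `mu`: among all base tuples (over all admissible
multicharges), take `b i` maximal and then `b (i−1)` minimal, and set
`K_i = b_i − b_{i−1} − 1` for `i ≠ 0`, `K_0 = b_0 − b_{e−1} − 2`. -/
noncomputable def Kconst {r : ℕ} (e : ℕ) (a : Fin r → ℤ) (mu : Multipartition r)
    (i : ℕ) : ℤ :=
  let Bi : ℤ := sSup {x : ℤ | ∃ a' bt, IsBaseTuple e a mu a' bt ∧ bt i = x}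
  let iprev : ℕ := if i = 0 then e - 1 else i - 1
  let Bp : ℤ := sInf {x : ℤ | ∃ a' bt, IsBaseTuple e a mu a' bt ∧ bt i = Bi ∧ bt iprev = x}
  Bi - Bp - (if i = 0 then 2 else 1)

/-- The map `φ_i : ℤ → ℤ`. -/
def phiMap (e i : ℕ) (x : ℤ) : ℤ :=
  if x % (e : ℤ) = ((i : ℤ) - 1) % e then x + 1
  else if x % (e : ℤ) = (i : ℤ) % e then x - 1
  else x

/-- Lexicographic order on multipartitions: `λ > μ`. -/
def lexGT {r : ℕ} (lam mu : Multipartition r) : Prop :=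
  ∃ j : Fin r, (∀ j' < j, (lam j').part = (mu j').part) ∧
    ∃ i : ℕ, (∀ i' < i, (lam j).part i' = (mu j).part i') ∧
      (mu j).part i < (lam j).part i

/-- `x` is above `y`: `j < j'` or (`j = j'` and `b < b'`). -/
def NodeAbove {r : ℕ} (x y : Node r) : Prop :=
  x.2.2 < y.2.2 ∨ (x.2.2 = y.2.2 ∧ x.1 < y.1)

/-- The order on nodes: `x < y` iff `y` is above `x`. -/
def NodeLT {r : ℕ} (x y : Node r) : Prop := NodeAbove y x

/-- `N_A(λ)` = (addable `i`-nodes of `λ` below `A`) − (removable `i`-nodes of `λ` below `A`). -/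
noncomputable def Nfac {r : ℕ} (e : ℕ) (a : Fin r → ℤ) (lam : Multipartition r)
    (i : ℤ) (A : Node r) : ℤ :=
  (Set.ncard {y : Node r | (lam y.2.2).Addable y.1 y.2.1 ∧
      (a y.2.2 + (y.2.1 : ℤ) - (y.1 : ℤ)) % (e : ℤ) = i % e ∧ NodeAbove A y} : ℤ) -
  (Set.ncard {y : Node r | (lam y.2.2).Removable y.1 y.2.1 ∧
      (a y.2.2 + (y.2.1 : ℤ) - (y.1 : ℤ)) % (e : ℤ) = i % e ∧ NodeAbove A y} : ℤ)

/-- `lam` is obtained from `mu` by adding one `e`-rim hook to some component: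
on β-sets, some `β ∈ B^j` with `β + e ∉ B^j` is replaced by `β + e`. -/
def AddRimHook {r : ℕ} (e : ℕ) (a : Fin r → ℤ) (mu lam : Multipartition r) : Prop :=
  ∃ (j : Fin r) (β : ℤ), β ∈ betaSet (a j) (mu j) ∧ β + (e : ℤ) ∉ betaSet (a j) (mu j) ∧
    betaSet (a j) (lam j) = insert (β + (e : ℤ)) (betaSet (a j) (mu j) \ {β}) ∧
    ∀ j' ≠ j, betaSet (a j') (lam j') = betaSet (a j') (mu j')

/-- The number of inversions (length) of a permutation of `Fin d`. -/
noncomputable def permLength (d : ℕ) (σ : Equiv.Perm (Fin d)) : ℕ :=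
  (Finset.univ.filter (fun p : Fin d × Fin d => p.1 < p.2 ∧ σ p.2 < σ p.1)).card

/-- beta numbers -/
def bet (aj : ℤ) (p : PartitionFun) (b : ℕ) : ℤ := (p.part b : ℤ) + aj - ((b : ℤ) + 1)

lemma mem_beta {aj : ℤ} {p : PartitionFun} {x : ℤ} :
    x ∈ betaSet aj p ↔ ∃ b, x = bet aj p b := Iff.rfl

lemma bet_lt {aj : ℤ} {p : PartitionFun} {b c : ℕ} (h : b < c) : bet aj p c < bet aj p b := by
  have := p.antitone h.le
  unfold bet
  omega

lemma bet_inj {aj : ℤ} {p : PartitionFun} : Function.Injective (bet aj p) := by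
  intro b c h
  rcases lt_trichotomy b c with h1 | h1 | h1
  · have := bet_lt (aj := aj) (p := p) h1; omega
  · exact h1
  · have := bet_lt (aj := aj) (p := p) h1; omega

lemma lex_fwd {aj : ℤ} {p q : PartitionFun} {i : ℕ} (h : ∀ i' < i, p.part i' = q.part i')
    (hlt : q.part i < p.part i) :
    ∃ x, x ∈ betaSet aj p ∧ x ∉ betaSet aj q ∧ ∀ y, x < y → (y ∈ betaSet aj p ↔ y ∈ betaSet aj q) := by
  have hb : ∀ i' < i, bet aj p i' = bet aj q i' := by
    intro i' hi'
    simp [bet, h i' hi']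
  have hl : bet aj q i < bet aj p i := by unfold bet; omega
  refine ⟨bet aj p i, ⟨i, rfl⟩, ?_, ?_⟩
  · rintro ⟨c, hc⟩
    change bet aj p i = bet aj q c at hc
    rcases lt_or_ge c i with h1 | h1
    · rw [← hb c h1] at hc
      have := bet_inj hc
      omega
    · rcases h1.eq_or_lt with h2 | h2
      · subst h2; omega
      · have := bet_lt (aj := aj) (p := q) h2
        omega
  · intro y hy
    constructor
    · rintro ⟨c, hc⟩
      change y = bet aj p c at hc
      have : c < i := by
        by_contra h1
        rcases (not_lt.1 h1).eq_or_lt with h2 | h2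
        · subst h2; omega
        · have := bet_lt (aj := aj) (p := p) h2
          omega
      exact ⟨c, by rw [hc]; exact hb c this⟩
    · rintro ⟨c, hc⟩
      change y = bet aj q c at hc
      have : c < i := by
        by_contra h1
        rcases (not_lt.1 h1).eq_or_lt with h2 | h2
        · subst h2; omega
        · have := bet_lt (aj := aj) (p := q) h2
          omega
      exact ⟨c, by rw [hc]; exact (hb c this).symm⟩

lemma lex_tri (p q : PartitionFun) : p.part = q.part ∨
    (∃ i, (∀ i' < i, p.part i' = q.part i') ∧ q.part i < p.part i) ∨
    (∃ i, (∀ i' < i, q.part i' = p.part i') ∧ p.part i < q.part i) := by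
  by_cases h : p.part = q.part
  · exact Or.inl h
  · right
    have h2 : ∃ i, p.part i ≠ q.part i := by
      by_contra h3
      push Not at h3
      exact h (funext h3)
    have h3 := Nat.find_spec h2
    have h4 : ∀ i' < Nat.find h2, p.part i' = q.part i' := fun i' hi' => by
      have := Nat.find_min h2 hi'
      push Not at this
      exact this
    rcases lt_or_gt_of_ne h3 with h5 | h5
    · exact Or.inr ⟨_, fun i' hi' => (h4 i' hi').symm, h5⟩
    · exact Or.inl ⟨_, h4, h5⟩

lemma part_eq_of_beta {aj : ℤ} {p q : PartitionFun} (h : betaSet aj p = betaSet aj q) :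
    p.part = q.part := by
  rcases lex_tri p q with h1 | ⟨i, h1, h2⟩ | ⟨i, h1, h2⟩
  · exact h1
  · obtain ⟨x, hx, hx', -⟩ := lex_fwd (aj := aj) h1 h2
    rw [h] at hx; exact absurd hx hx'
  · obtain ⟨x, hx, hx', -⟩ := lex_fwd (aj := aj) h1 h2
    rw [h] at hx'; exact absurd hx hx'

lemma beta_eq_of_part {aj : ℤ} {p q : PartitionFun} (h : p.part = q.part) :
    betaSet aj p = betaSet aj q := by
  unfold betaSet; rw [h]

lemma lex_bwd {aj : ℤ} {p q : PartitionFun} {x : ℤ} (hx : x ∈ betaSet aj p)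
    (hx' : x ∉ betaSet aj q) (hy : ∀ y, x < y → (y ∈ betaSet aj p ↔ y ∈ betaSet aj q)) :
    ∃ i, (∀ i' < i, p.part i' = q.part i') ∧ q.part i < p.part i := by
  rcases lex_tri p q with h1 | h1 | ⟨i, h1, h2⟩
  · rw [beta_eq_of_part h1] at hx; exact absurd hx hx'
  · exact h1
  · obtain ⟨z, hz, hz', hz2⟩ := lex_fwd (aj := aj) h1 h2
    rcases lt_trichotomy x z with h3 | h3 | h3
    · exact absurd ((hy z h3).2 hz) hz'
    · subst h3; exact absurd hx hz'
    · exact absurd ((hz2 x h3).2 hx) hx'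

lemma mod_facts {e i : ℕ} (he : 2 ≤ e) (hi : i < e) (x : ℤ) :
    (x % (e : ℤ) = ((i : ℤ) - 1) % e ↔ (x + 1) % (e : ℤ) = (i : ℤ) % e) := by
  constructor
  · intro h
    have : x ≡ (i : ℤ) - 1 [ZMOD e] := h
    have := this.add_right 1
    simp only [sub_add_cancel] at this
    exact this
  · intro h
    have : x + 1 ≡ (i : ℤ) [ZMOD e] := h
    have := this.sub_right 1
    simp only [add_sub_cancel_right] at this
    exact this

lemma mod_succ_ne {e : ℕ} (he : 2 ≤ e) (x : ℤ) : (x + 1) % (e : ℤ) ≠ x % (e : ℤ) := by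
  intro h
  have := Int.emod_emod_of_dvd (x + 1 - x) (dvd_refl (e : ℤ))
  have h2 : (e : ℤ) ∣ (x + 1 - x) := Int.dvd_of_emod_eq_zero (Int.emod_eq_emod_iff_emod_sub_eq_zero.1 h)
  have h3 : (e : ℤ) ∣ 1 := by simpa using h2
  have := Int.le_of_dvd (by norm_num) h3
  omega

lemma phi_invol {e i : ℕ} (he : 2 ≤ e) (hi : i < e) (x : ℤ) :
    phiMap e i (phiMap e i x) = x := by
  unfold phiMap
  by_cases h1 : x % (e : ℤ) = ((i : ℤ) - 1) % e
  · have h2 := (mod_facts he hi x).1 h1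
    have h3 := mod_succ_ne he x
    rw [if_pos h1]
    rw [if_neg (by rw [← h1]; exact h3), if_pos h2]; ring
  · rw [if_neg h1]
    by_cases h2 : x % (e : ℤ) = (i : ℤ) % e
    · rw [if_pos h2, if_pos ((mod_facts he hi (x-1)).2 (by simpa using h2))]; ring
    · rw [if_neg h2, if_neg h1, if_neg h2]

lemma mem_phi_image {e i : ℕ} (he : 2 ≤ e) (hi : i < e) (S : Set ℤ) (x : ℤ) :
    x ∈ phiMap e i '' S ↔ phiMap e i x ∈ S := by
  constructor
  · rintro ⟨y, hy, rfl⟩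
    rwa [phi_invol he hi]
  · intro h
    exact ⟨_, h, phi_invol he hi x⟩

lemma phi_order {e i : ℕ} (he : 2 ≤ e) (hi : i < e) {S T : Set ℤ} {x : ℤ}
    (hS : ∀ y, (y + 1) % (e : ℤ) = (i : ℤ) % e → y ∈ S → y + 1 ∈ S)
    (hT : ∀ y, (y + 1) % (e : ℤ) = (i : ℤ) % e → y ∈ T → y + 1 ∈ T)
    (hx : x ∈ S) (hx' : x ∉ T) (hy : ∀ y, x < y → (y ∈ S ↔ y ∈ T)) :
    ∃ z, z ∈ phiMap e i '' S ∧ z ∉ phiMap e i '' T ∧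
      ∀ y, z < y → (y ∈ phiMap e i '' S ↔ y ∈ phiMap e i '' T) := by
  have key : ∀ z, phiMap e i z ∈ S → phiMap e i z ∉ T → (∀ y, z < y → (phiMap e i y ∈ S ↔ phiMap e i y ∈ T)) →
     ∃ z, z ∈ phiMap e i '' S ∧ z ∉ phiMap e i '' T ∧
      ∀ y, z < y → (y ∈ phiMap e i '' S ↔ y ∈ phiMap e i '' T) := by
    intro z h1 h2 h3
    refine ⟨z, (mem_phi_image he hi S z).2 h1, fun h => h2 ((mem_phi_image he hi T z).1 h), ?_⟩
    intro y h
    rw [mem_phi_image he hi, mem_phi_image he hi]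
    exact h3 y h
  have hge : ∀ y, y - 1 ≤ phiMap e i y := by
    intro y; unfold phiMap; split_ifs <;> omega
  have hf1 : ∀ y, (y + 1) % (e : ℤ) = (i : ℤ) % e → phiMap e i y = y + 1 := by
    intro y h
    unfold phiMap; rw [if_pos ((mod_facts he hi y).2 h)]
  have hf2 : ∀ y, y % (e : ℤ) = (i : ℤ) % e → phiMap e i y = y - 1 := by
    intro y h
    have := hf1 (y - 1) (by simpa using h)
    have h2 := phi_invol he hi (y - 1)
    rw [this] at h2
    simpa using h2
  by_cases h1 : (x + 1) % (e : ℤ) = (i : ℤ) % e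
  · -- x on runner i-1
    have hxS := hS x h1 hx
    apply key (x + 1)
    · rw [hf2 _ h1]; simpa using hx
    · rw [hf2 _ h1]; simpa using hx'
    · intro y hxy
      apply hy
      have := hge y
      omega
  · by_cases h2 : x % (e : ℤ) = (i : ℤ) % e
    · have hxT : x - 1 ∉ T := fun h => hx' (by simpa using hT (x - 1) (by simpa using h2) h)
      by_cases h3 : x - 1 ∈ S
      · apply key x
        · rwa [hf2 _ h2]
        · rwa [hf2 _ h2]
        · intro y hxy
          apply hy
          have := hge y
          by_cases h4 : y = x + 1
          · subst h4
            have h5 : (x + 1) % (e : ℤ) ≠ (i : ℤ) % e := h1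
            have : phiMap e i (x + 1) ≠ x := by
              intro h6
              have h7 := phi_invol he hi (x + 1)
              rw [h6, hf2 _ h2] at h7
              omega
            have := hge (x + 1)
            omega
          · omega
      · apply key (x - 1)
        · rw [hf1 _ (by simpa using h2)]; simpa using hx
        · rw [hf1 _ (by simpa using h2)]; simpa using hx'
        · intro y hxy
          by_cases h4 : y = x
          · subst h4
            rw [hf2 _ h2]; tauto
          · apply hy
            have := hge y
            by_cases h5 : y = x + 1
            · subst h5
              have : phiMap e i (x + 1) ≠ x := by
                intro h6
                have h7 := phi_invol he hi (x + 1)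
                rw [h6, hf2 _ h2] at h7
                omega
              omega
            · omega
    · have hfx : phiMap e i x = x := by
        unfold phiMap
        rw [if_neg (fun h => h1 ((mod_facts he hi x).1 h)), if_neg h2]
      apply key x
      · rwa [hfx]
      · rwa [hfx]
      · intro y hxy
        apply hy
        have := hge y
        have : phiMap e i y ≠ x := by
          intro h
          have h7 := phi_invol he hi y
          rw [h, hfx] at h7
          omega
        omega

/-- residue indicator -/
noncomputable def ind (e : ℕ) (k x : ℤ) : ℤ := if x % (e : ℤ) = k % e then 1 else 0

lemma div_step {e : ℕ} (he : 2 ≤ e) (y : ℤ) :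
    y / (e : ℤ) - (y - 1) / (e : ℤ) = if y % (e : ℤ) = 0 then 1 else 0 := by
  have hpos : (0 : ℤ) < e := by omega
  have h1 := Int.emod_add_mul_ediv y e
  have h2 := Int.emod_nonneg y hpos.ne'
  have h3 := Int.emod_lt_of_pos y hpos
  split_ifs with h
  · have : (y - 1) / (e : ℤ) = y / e - 1 := by
      rw [Int.ediv_eq_iff_of_pos hpos]
      constructor <;> nlinarith
    omega
  · have : (y - 1) / (e : ℤ) = y / e := by
      rw [Int.ediv_eq_iff_of_pos hpos]
      constructor
      · have : 1 ≤ y % (e : ℤ) := by omega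
        nlinarith
      · nlinarith
    omega

lemma ind_eq {e : ℕ} (he : 2 ≤ e) (k x : ℤ) :
    (x - k) / (e : ℤ) - (x - k - 1) / (e : ℤ) = ind e k x := by
  rw [div_step he, ind]
  simp only [Int.emod_eq_emod_iff_emod_sub_eq_zero]

/-- bound for a multipartition -/
def Bd {r : ℕ} (lam : Multipartition r) (N : ℕ) : Prop :=
  ∀ j, (∀ b, N ≤ b → (lam j).part b = 0) ∧ ∀ b, (lam j).part b ≤ N

lemma exists_Bd {r : ℕ} (lam : Multipartition r) : ∃ N, ∀ M, N ≤ M → Bd lam M := by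
  choose f hf using fun j => (lam j).finite_support
  refine ⟨∑ j, (f j + (lam j).part 0), fun M hM j => ?_⟩
  have h1 : f j + (lam j).part 0 ≤ ∑ j, (f j + (lam j).part 0) :=
    Finset.single_le_sum (f := fun j => f j + (lam j).part 0) (fun _ _ => Nat.zero_le _)
      (Finset.mem_univ j)
  refine ⟨fun b hb => hf j b (by omega), fun b => ?_⟩
  have := (lam j).antitone (Nat.zero_le b)
  omega

lemma row_count {e : ℕ} (he : 2 ≤ e) (s k : ℤ) (n : ℕ) :
    (∑ c ∈ Finset.range n, if (s + (c : ℤ)) % (e : ℤ) = k % e then (1 : ℤ) else 0) =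
      (s + n - 1 - k) / (e : ℤ) - (s - 1 - k) / (e : ℤ) := by
  induction n with
  | zero => simp
  | succ n ih =>
    rw [Finset.sum_range_succ, ih]
    have := ind_eq he k (s + n)
    rw [ind] at this
    rw [← this]
    have h1 : s + ((n + 1 : ℕ) : ℤ) - 1 - k = s + n - k := by push_cast; ring
    have h2 : s + (n : ℤ) - 1 - k = s + n - k - 1 := by ring
    rw [h1, h2]; ring

lemma nodeCount_eq {e r : ℕ} (he : 2 ≤ e) (a : Fin r → ℤ) {lam : Multipartition r} {N : ℕ}
    (hN : Bd lam N) (k : ℤ) :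
    (nodeCount e a lam k : ℤ) = ∑ j, ∑ b ∈ Finset.range (N + 1),
      ((bet (a j) (lam j) b - k) / (e : ℤ) - (a j - b - 1 - k) / (e : ℤ)) := by
  have hset : {x : Node r | (lam x.2.2).InDiag x.1 x.2.1 ∧
      (a x.2.2 + (x.2.1 : ℤ) - (x.1 : ℤ)) % (e : ℤ) = k % e} =
      ↑((Finset.univ : Finset (Fin r)).biUnion fun j => (Finset.range (N + 1)).biUnion fun b =>
        ((Finset.range ((lam j).part b)).filter
          (fun c : ℕ => ((a j - b) + (c : ℤ)) % (e : ℤ) = k % e)).image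
            (fun c => ((b, c, j) : Node r))) := by
    ext ⟨b, c, j⟩
    simp only [PartitionFun.InDiag, Set.mem_ofPred_eq, Finset.coe_biUnion, Set.mem_iUnion,
      Finset.coe_image, Set.mem_image, Finset.mem_coe, Finset.mem_filter, Finset.mem_range,
      Finset.mem_univ, Prod.mk.injEq]
    have hr : a j + (c : ℤ) - b = a j - b + c := by ring
    constructor
    · rintro ⟨h1, h2⟩
      refine ⟨j, trivial, b, ?_, c, ⟨h1, by rw [← hr]; exact h2⟩, rfl, rfl, rfl⟩
      by_contra h3
      have := (hN j).1 b (by omega)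
      omega
    · rintro ⟨j', -, b', hb', c', ⟨h1, h2⟩, rfl, rfl, rfl⟩
      exact ⟨h1, by rw [hr]; exact h2⟩
  rw [nodeCount, hset, Set.ncard_coe_finset, Finset.card_biUnion]
  · push_cast
    refine Finset.sum_congr rfl fun j _ => ?_
    rw [Finset.card_biUnion]
    · push_cast
      refine Finset.sum_congr rfl fun b _ => ?_
      rw [Finset.card_image_of_injective _ (fun c c' h => by simpa using h), Finset.card_filter]
      push_cast
      rw [row_count he]
      unfold bet
      congr 2
      ring
    · intro b _ b' _ hbb
      change Disjoint _ _
      rw [Finset.disjoint_left]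
      intro x hx hx'
      simp only [Finset.mem_image] at hx hx'
      obtain ⟨c, -, rfl⟩ := hx
      obtain ⟨c', -, h⟩ := hx'
      simp only [Prod.mk.injEq] at h
      exact hbb h.1.symm
  · intro j _ j' _ hjj
    change Disjoint _ _
    rw [Finset.disjoint_left]
    intro x hx hx'
    simp only [Finset.mem_biUnion, Finset.mem_image] at hx hx'
    obtain ⟨b, -, c, -, rfl⟩ := hx
    obtain ⟨b', -, c', -, h⟩ := hx'
    simp only [Prod.mk.injEq] at h
    exact hjj h.2.2.symm

/-- bead count on a runner -/
noncomputable def RR {r : ℕ} (e : ℕ) (a : Fin r → ℤ) (lam : Multipartition r) (N : ℕ) (k : ℤ) : ℤ :=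
  ∑ j, ∑ b ∈ Finset.range (N + 1), ind e k (bet (a j) (lam j) b)

lemma nodeCount_diff {e r : ℕ} (he : 2 ≤ e) (a : Fin r → ℤ) {lam : Multipartition r} {N : ℕ}
    (hN : Bd lam N) (k : ℤ) :
    (nodeCount e a lam k : ℤ) - nodeCount e a lam (k + 1) = RR e a lam N k
      - ∑ j, ∑ b ∈ Finset.range (N + 1), ind e k (a j - b - 1) := by
  rw [nodeCount_eq he a hN, nodeCount_eq he a hN, RR]
  simp only [← Finset.sum_sub_distrib]
  refine Finset.sum_congr rfl fun j _ => Finset.sum_congr rfl fun b _ => ?_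
  rw [← ind_eq he, ← ind_eq he]
  rw [← sub_sub, ← sub_sub]
  ring

lemma sum_ind {e : ℕ} (he : 2 ≤ e) (g : ℕ → ℤ) (x : ℤ) :
    ∑ k ∈ Finset.range e, g k * ind e k x = g (x % (e : ℤ)).toNat := by
  have hpos : (0 : ℤ) < e := by omega
  have h2 := Int.emod_nonneg x hpos.ne'
  have h3 := Int.emod_lt_of_pos x hpos
  rw [Finset.sum_eq_single (x % (e : ℤ)).toNat]
  · rw [ind, if_pos, mul_one]
    rw [Int.toNat_of_nonneg h2, Int.emod_emod]
  · intro k hk hne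
    rw [ind, if_neg, mul_zero]
    intro h
    have hk' := Finset.mem_range.1 hk
    rw [Int.emod_eq_of_lt (a := (k : ℤ)) (by omega) (by omega)] at h
    omega
  · intro h
    exfalso; apply h; rw [Finset.mem_range]; omega

lemma msize_eq {e r : ℕ} (he : 2 ≤ e) (a : Fin r → ℤ) (lam : Multipartition r) :
    msize lam = ∑ k ∈ Finset.range e, nodeCount e a lam k := by
  obtain ⟨N, hN⟩ := exists_Bd lam
  have hN := hN N le_rfl
  have hpos : (0 : ℤ) < e := by omega
  have hfin : (diag lam).Finite := by
    apply Set.Finite.subset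
      (Finset.finite_toSet (Finset.range N ×ˢ Finset.range N ×ˢ (Finset.univ : Finset (Fin r))))
    rintro ⟨b, c, j⟩ h
    simp only [diag, PartitionFun.InDiag, Set.mem_ofPred_eq] at h
    simp only [Finset.coe_product, Set.mem_prod, Finset.mem_coe, Finset.mem_range, Finset.mem_univ, and_true]
    constructor
    · by_contra h3
      have := (hN j).1 b (by omega)
      omega
    · have := (hN j).2 b
      omega
  have hc : ∀ k : ℕ, k < e → nodeCount e a lam k = (hfin.toFinset.filter (fun x : Node r =>
      ((a x.2.2 + (x.2.1 : ℤ) - (x.1 : ℤ)) % (e : ℤ)).toNat = k)).card := by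
    intro k hk
    rw [nodeCount, ← Set.ncard_coe_finset]
    congr 1
    ext ⟨b, c, j⟩
    simp only [diag, Set.mem_ofPred_eq, Finset.coe_filter, Set.Finite.mem_toFinset]
    rw [Int.emod_eq_of_lt (a := (k : ℤ)) (by omega) (by omega)]
    have h2 := Int.emod_nonneg (a j + (c : ℤ) - b) hpos.ne'
    constructor
    · rintro ⟨h, h'⟩; exact ⟨h, by omega⟩
    · rintro ⟨h, h'⟩; exact ⟨h, by omega⟩
  rw [Finset.sum_congr rfl (fun k hk => hc k (Finset.mem_range.1 hk)),
    ← Finset.card_eq_sum_card_fiberwise, msize, Set.ncard_eq_toFinset_card _ hfin]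
  intro x _
  have h2 := Int.emod_nonneg (a x.2.2 + (x.2.1 : ℤ) - (x.1 : ℤ)) hpos.ne'
  have h3 := Int.emod_lt_of_pos (a x.2.2 + (x.2.1 : ℤ) - (x.1 : ℤ)) hpos
  simp only [Finset.coe_range, Set.mem_Iio]
  omega

lemma removable_eq {e r : ℕ} (a : Fin r → ℤ) {lam : Multipartition r} {N : ℕ}
    (hN : Bd lam N) (i : ℤ) (j : Fin r) :
    (removableCount e a lam i j : ℤ) = ∑ b ∈ Finset.range (N + 1),
      if bet (a j) (lam j) (b + 1) ≠ bet (a j) (lam j) b - 1 then ind e i (bet (a j) (lam j) b) else 0 := by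
  have hset : {p : ℕ × ℕ | (lam j).Removable p.1 p.2 ∧
    (a j + (p.2 : ℤ) - (p.1 : ℤ)) % (e : ℤ) = i % e} = ↑(((Finset.range (N + 1)).filter (fun b : ℕ =>
      bet (a j) (lam j) (b + 1) ≠ bet (a j) (lam j) b - 1 ∧ bet (a j) (lam j) b % (e : ℤ) = i % e)).image
        (fun b => (b, (lam j).part b - 1))) := by
    ext ⟨b, c⟩
    simp only [PartitionFun.Removable, Set.mem_ofPred_eq, Finset.coe_image, Finset.coe_filter,
      Set.mem_image, Prod.mk.injEq, Finset.mem_range]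
    constructor
    · rintro ⟨⟨h1, h2⟩, h3⟩
      refine ⟨b, ⟨?_, ?_, ?_⟩, rfl, by omega⟩
      · by_contra h4
        have := (hN j).1 b (by omega)
        omega
      · unfold bet; push_cast; omega
      · rw [← h3]; unfold bet; congr 1; rw [h1]; push_cast; ring
    · rintro ⟨b', ⟨h1, h2, h3⟩, rfl, rfl⟩
      have := (lam j).antitone (Nat.le_succ b')
      have h5 : (lam j).part (b' + 1) < (lam j).part b' := by
        unfold bet at h2; push_cast at h2; simp only [Nat.succ_eq_add_one] at this; omega
      refine ⟨⟨by omega, by omega⟩, ?_⟩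
      rw [← h3]; unfold bet; congr 1; rw [Nat.cast_sub (by omega)]; push_cast; ring
  rw [removableCount, hset, Set.ncard_coe_finset, Finset.card_image_of_injective _
    (fun b b' h => by simp only [Prod.mk.injEq] at h; exact h.1), Finset.card_filter]
  push_cast
  refine Finset.sum_congr rfl fun b _ => ?_
  unfold ind
  split_ifs <;> tauto

lemma addable_eq {e r : ℕ} (a : Fin r → ℤ) {lam : Multipartition r} {N : ℕ}
    (hN : Bd lam N) (i : ℤ) (j : Fin r) :
    (addableCount e a lam i j : ℤ) = ∑ b ∈ Finset.range (N + 1),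
      if b = 0 ∨ bet (a j) (lam j) b ≠ bet (a j) (lam j) (b - 1) - 1
        then ind e i (bet (a j) (lam j) b + 1) else 0 := by
  have hset : {p : ℕ × ℕ | (lam j).Addable p.1 p.2 ∧
    (a j + (p.2 : ℤ) - (p.1 : ℤ)) % (e : ℤ) = i % e} = ↑(((Finset.range (N + 1)).filter (fun b : ℕ =>
      (b = 0 ∨ bet (a j) (lam j) b ≠ bet (a j) (lam j) (b - 1) - 1) ∧
        (bet (a j) (lam j) b + 1) % (e : ℤ) = i % e)).image
        (fun b => (b, (lam j).part b))) := by
    ext ⟨b, c⟩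
    simp only [PartitionFun.Addable, Set.mem_ofPred_eq, Finset.coe_image, Finset.coe_filter,
      Set.mem_image, Prod.mk.injEq, Finset.mem_range]
    have hres : bet (a j) (lam j) b + 1 = a j + ((lam j).part b : ℤ) - b := by unfold bet; ring
    constructor
    · rintro ⟨⟨h1, h2⟩, h3⟩
      refine ⟨b, ⟨?_, ?_, ?_⟩, rfl, h1⟩
      · by_contra h4
        have := (hN j).1 (b - 1) (by omega)
        omega
      · rcases h2 with h2 | h2
        · exact Or.inl h2
        · by_cases hb : b = 0
          · exact Or.inl hb
          · right; unfold bet; rw [Nat.cast_sub (by omega)]; push_cast; omega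
      · rw [hres, h1]; exact h3
    · rintro ⟨b', ⟨h1, h2, h3⟩, rfl, rfl⟩
      refine ⟨⟨rfl, ?_⟩, by rw [← hres]; exact h3⟩
      by_cases hb : b' = 0
      · exact Or.inl hb
      · right
        have h4 := h2.resolve_left hb
        have := (lam j).antitone (Nat.sub_le b' 1)
        unfold bet at h4; rw [Nat.cast_sub (by omega)] at h4; push_cast at h4; omega
  rw [addableCount, hset, Set.ncard_coe_finset, Finset.card_image_of_injective _
    (fun b b' h => by simp only [Prod.mk.injEq] at h; exact h.1), Finset.card_filter]
  push_cast
  refine Finset.sum_congr rfl fun b _ => ?_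
  unfold ind
  split_ifs <;> tauto

lemma delta_eq {e r : ℕ} (a : Fin r → ℤ) {lam : Multipartition r} {N : ℕ}
    (hN : Bd lam N) (i : ℤ) (j : Fin r) :
    delta e a lam i j = ∑ b ∈ Finset.range (N + 1), ind e i (bet (a j) (lam j) b)
      - ∑ b ∈ Finset.range (N + 1), ind e i (bet (a j) (lam j) b + 1) - ind e i (a j - N - 1) := by
  rw [delta, removable_eq a hN, addable_eq a hN]
  have h1 : ∀ M : ℕ, (∑ b ∈ Finset.range (M + 1),
      if bet (a j) (lam j) (b + 1) ≠ bet (a j) (lam j) b - 1 then ind e i (bet (a j) (lam j) b) else 0)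
      - (∑ b ∈ Finset.range (M + 1),
      if b = 0 ∨ bet (a j) (lam j) b ≠ bet (a j) (lam j) (b - 1) - 1
        then ind e i (bet (a j) (lam j) b + 1) else 0) =
      ∑ b ∈ Finset.range (M + 1), ind e i (bet (a j) (lam j) b)
      - ∑ b ∈ Finset.range (M + 1), ind e i (bet (a j) (lam j) b + 1)
      - if bet (a j) (lam j) (M + 1) = bet (a j) (lam j) M - 1 then ind e i (bet (a j) (lam j) M) else 0 := by
    intro M
    induction M with
    | zero =>
      simp only [zero_add, Finset.sum_range_one, true_or, if_true]
      split_ifs <;> first | ring1 | (exfalso; tauto)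
    | succ M ih =>
      rw [Finset.sum_range_succ _ (M + 1), Finset.sum_range_succ _ (M + 1),
        Finset.sum_range_succ _ (M + 1), Finset.sum_range_succ _ (M + 1)]
      have h3 : ∀ A B C D A' B' C' D' L L' : ℤ, A - B = A' - B' - L → C - D = C' - D' + L - L' →
          (A + C) - (B + D) = (A' + C') - (B' + D') - L' := by
        intros; linarith
      apply h3 _ _ _ _ _ _ _ _ _ _ ih
      simp only [Nat.add_eq_zero_iff, one_ne_zero, and_false, false_or, Nat.add_sub_cancel]
      by_cases hA : bet (a j) (lam j) (M + 1) = bet (a j) (lam j) M - 1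
      · rw [if_neg (not_not.2 hA), if_pos hA]
        have : bet (a j) (lam j) (M + 1) + 1 = bet (a j) (lam j) M := by omega
        rw [this]
        split_ifs <;> first | ring1 | (exfalso; tauto)
      · rw [if_pos hA, if_neg hA]
        split_ifs <;> first | ring1 | (exfalso; tauto)
  rw [h1]
  have e1 : bet (a j) (lam j) N = a j - N - 1 := by
    unfold bet; rw [(hN j).1 N le_rfl]; push_cast; ring
  have e2 : bet (a j) (lam j) (N + 1) = a j - N - 1 - 1 := by
    unfold bet; rw [(hN j).1 (N + 1) (by omega)]; push_cast; ring
  rw [if_pos (by rw [e1, e2]), e1]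

lemma const_of_step {f : ℤ → ℤ} (h : ∀ k, f k = f (k + 1)) (k : ℤ) : f k = f 0 := by
  induction k using Int.induction_on with
  | zero => rfl
  | succ n ih => rw [← h, ih]
  | pred n ih => rw [h, sub_add_cancel, ih]

lemma ind_succ {e : ℕ} (he : 2 ≤ e) (k x : ℤ) : ind e (k + 1) (x + 1) = ind e k x := by
  rw [← ind_eq he, ← ind_eq he]
  congr 2 <;> ring

lemma hub_eq {e r : ℕ} (he : 2 ≤ e) (a : Fin r → ℤ) {lam : Multipartition r} {N : ℕ}
    (hN : Bd lam N) (k : ℤ) :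
    hub e a lam (k + 1) = RR e a lam N (k + 1) - RR e a lam N k
      - ∑ j, ind e (k + 1) (a j - N - 1) := by
  simp only [hub, RR, delta_eq a hN, ind_succ he, Finset.sum_sub_distrib]

lemma RR_sum {e r : ℕ} (he : 2 ≤ e) (a : Fin r → ℤ) (lam : Multipartition r) (N : ℕ) (g : ℕ → ℤ) :
    ∑ k ∈ Finset.range e, g k * RR e a lam N k =
      ∑ j, ∑ b ∈ Finset.range (N + 1), g (bet (a j) (lam j) b % (e : ℤ)).toNat := by
  simp only [RR, Finset.mul_sum]
  rw [Finset.sum_comm]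
  refine Finset.sum_congr rfl fun j _ => ?_
  rw [Finset.sum_comm]
  refine Finset.sum_congr rfl fun b _ => ?_
  exact sum_ind he g _

lemma RR_eq {e r : ℕ} (he : 2 ≤ e) (a : Fin r → ℤ) {lam m : Multipartition r} {N : ℕ}
    (hN : Bd lam N) (hN' : Bd m N) (h : SameHub e a lam m) (k : ℤ) :
    RR e a lam N k = RR e a m N k := by
  have h1 : ∀ k, RR e a lam N k - RR e a m N k = RR e a lam N (k + 1) - RR e a m N (k + 1) := by
    intro k
    have := h (k + 1)
    rw [hub_eq he a hN, hub_eq he a hN'] at this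
    linarith
  have h2 := const_of_step (f := fun k => RR e a lam N k - RR e a m N k) h1
  have h3 := RR_sum he a lam N (fun _ => 1)
  have h4 := RR_sum he a m N (fun _ => 1)
  have h5 : ∑ k ∈ Finset.range e, (RR e a lam N k - RR e a m N k) = 0 := by
    rw [Finset.sum_sub_distrib]
    simp only [one_mul] at h3 h4
    rw [h3, h4]; ring
  rw [Finset.sum_congr rfl (fun (k : ℕ) _ => h2 k)] at h5
  simp only [Finset.sum_const, Finset.card_range, smul_eq_mul, nsmul_eq_mul] at h5
  have h6 : RR e a lam N 0 - RR e a m N 0 = 0 := by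
    rcases mul_eq_zero.1 h5 with h | h
    · exfalso
      have : e = 0 := by exact_mod_cast h
      omega
    · exact h
  have := h2 k
  linarith

lemma node_diff {e r : ℕ} (he : 2 ≤ e) (a : Fin r → ℤ) {lam m : Multipartition r}
    (h : SameHub e a lam m) (k : ℤ) :
    (nodeCount e a lam k : ℤ) - nodeCount e a m k = nodeCount e a lam 0 - nodeCount e a m 0 := by
  obtain ⟨N1, h1⟩ := exists_Bd lam
  obtain ⟨N2, h2⟩ := exists_Bd m
  have hN := h1 (max N1 N2) (le_max_left _ _)
  have hN' := h2 (max N1 N2) (le_max_right _ _)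
  refine const_of_step (f := fun k => (nodeCount e a lam k : ℤ) - nodeCount e a m k) ?_ k
  intro k
  have e1 := nodeCount_diff he a hN k
  have e2 := nodeCount_diff he a hN' k
  rw [RR_eq he a hN hN' h] at e1
  linarith

lemma weight_diff {e r : ℕ} (he : 2 ≤ e) (a : Fin r → ℤ) {lam m : Multipartition r}
    (h : SameHub e a lam m) :
    weight e a lam = weight e a m +
      (((nodeCount e a lam 0 : ℤ) - nodeCount e a m 0 : ℤ) : ℚ) * r := by
  have h1 : ∀ k, (nodeCount e a lam k : ℚ) = nodeCount e a m k +
      (((nodeCount e a lam 0 : ℤ) - nodeCount e a m 0 : ℤ) : ℚ) := by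
    intro k
    have := node_diff he a h k
    rw [← this]
    push_cast; ring
  generalize (((nodeCount e a lam 0 : ℤ) - nodeCount e a m 0 : ℤ) : ℚ) = T at h1 ⊢
  simp only [weight, h1, Finset.sum_add_distrib, add_sub_add_right_eq_sub]
  simp only [Finset.sum_const, Finset.card_univ, Fintype.card_fin, nsmul_eq_mul]
  ring

lemma size_T {e r : ℕ} (he : 2 ≤ e) (a : Fin r → ℤ) {lam m : Multipartition r}
    (h : SameHub e a lam m) :
    (msize lam : ℤ) = msize m + e * ((nodeCount e a lam 0 : ℤ) - nodeCount e a m 0) := by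
  have h0 := node_diff he a h
  rw [msize_eq he a, msize_eq he a]
  generalize ((nodeCount e a lam 0 : ℤ) - nodeCount e a m 0) = T at h0
  have : ∀ k : ℤ, (nodeCount e a lam k : ℤ) = nodeCount e a m k + T := fun k => by
    have := h0 k; linarith
  push_cast
  simp only [this, Finset.sum_add_distrib, Finset.sum_const, Finset.card_range, nsmul_eq_mul]

lemma mem_beta_low {aj : ℤ} {p : PartitionFun} {N : ℕ} (h : ∀ b, N ≤ b → p.part b = 0) {x : ℤ}
    (hx : x ≤ aj - N - 1) : x ∈ betaSet aj p := by
  refine ⟨(aj - 1 - x).toNat, ?_⟩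
  rw [h _ (by omega)]
  omega

lemma beta_le {aj : ℤ} {p : PartitionFun} {N : ℕ} (h : ∀ b, p.part b ≤ N) {x : ℤ}
    (hx : x ∈ betaSet aj p) : x ≤ aj + N - 1 := by
  obtain ⟨b, rfl⟩ := hx
  have := h b
  omega

lemma sum_bet {aj : ℤ} {p : PartitionFun} {N : ℕ} (h : ∀ b, N ≤ b → p.part b = 0)
    (h' : ∀ b, p.part b ≤ N) (f : ℤ → ℤ) :
    ∑ b ∈ Finset.range (N + 1), f (bet aj p b) =
      ∑ x ∈ Finset.Ico (aj - N - 1) (aj + N + 1), if x ∈ betaSet aj p then f x else 0 := by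
  rw [← Finset.sum_filter, ← Finset.sum_image (g := bet aj p) (fun _ _ _ _ h => bet_inj h)]
  refine Finset.sum_congr ?_ fun _ _ => rfl
  ext x
  simp only [Finset.mem_image, Finset.mem_range, Finset.mem_filter, Finset.mem_Ico]
  constructor
  · rintro ⟨b, hb, rfl⟩
    have hm : bet aj p b ∈ betaSet aj p := ⟨b, rfl⟩
    have := beta_le h' hm
    refine ⟨⟨?_, by omega⟩, hm⟩
    unfold bet; omega
  · rintro ⟨⟨h1, h2⟩, b, hb⟩
    refine ⟨b, ?_, hb.symm⟩
    by_contra h3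
    rw [h b (by omega)] at hb
    push_cast at hb
    omega

lemma level_greatest {e : ℕ} (he : 2 ≤ e) (aj : ℤ) (p : PartitionFun) (k : ℕ) :
    IsGreatest {x : ℤ | x * (e : ℤ) + (k : ℤ) ∈ betaSet aj p} (level e aj p k) := by
  have hpos : (0 : ℤ) < e := by omega
  obtain ⟨N, hN⟩ := exists_Bd (r := 1) (fun _ => p)
  have hN := hN N le_rfl 0
  have hbdd : BddAbove {x : ℤ | x * (e : ℤ) + (k : ℤ) ∈ betaSet aj p} := by
    refine ⟨(aj + N - 1 - k) / e, fun x hx => ?_⟩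
    have := beta_le hN.2 hx
    rw [Int.le_ediv_iff_mul_le hpos]
    linarith
  refine ⟨Int.csSup_mem ⟨(aj - N - 1 - k) / e, mem_beta_low hN.1 ?_⟩ hbdd,
    fun x hx => le_csSup hbdd hx⟩
  have := Int.ediv_mul_le (aj - N - 1 - k) hpos.ne'
  linarith

lemma beta_shift (aj t : ℤ) (p : PartitionFun) (x : ℤ) :
    x + t ∈ betaSet (aj + t) p ↔ x ∈ betaSet aj p := by
  unfold betaSet
  constructor
  · rintro ⟨b, hb⟩; exact ⟨b, by linarith⟩
  · rintro ⟨b, hb⟩; exact ⟨b, by linarith⟩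

lemma level_shift {e : ℕ} (he : 2 ≤ e) (aj q : ℤ) (p : PartitionFun) (k : ℕ) :
    level e (aj + e * q) p k = level e aj p k + q := by
  refine (level_greatest he (aj + e * q) p k).unique ⟨?_, ?_⟩
  · have := (level_greatest he aj p k).1
    have h2 := (beta_shift aj (e * q) p _).2 this
    change _ ∈ betaSet _ _
    convert h2 using 1; ring
  · intro x hx
    have h2 : x - q ≤ level e aj p k := (level_greatest he aj p k).2 (by
      change (x - q) * (e : ℤ) + k ∈ betaSet _ _
      rw [← beta_shift aj (e * q)]
      change _ ∈ betaSet _ _ at hx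
      convert hx using 1; ring)
    linarith

lemma core_level {e : ℕ} (he : 2 ≤ e) {aj : ℤ} {p : PartitionFun} (hc : IsECore e aj p) (k : ℕ)
    (x : ℤ) : x * e + k ∈ betaSet aj p ↔ x ≤ level e aj p k := by
  have hg := level_greatest he aj p k
  constructor
  · intro h; exact hg.2 h
  · intro h
    have : ∀ n : ℕ, (level e aj p k - n) * e + k ∈ betaSet aj p := by
      intro n
      induction n with
      | zero => simpa using hg.1
      | succ n ih =>
        have := hc _ ih
        convert this using 1; push_cast; ring
    have h2 := this (level e aj p k - x).toNat
    rw [Int.toNat_of_nonneg (by omega)] at h2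
    simpa using h2

lemma K_base {e r : ℕ} (he : 2 ≤ e) (hr : 0 < r) (a : Fin r → ℤ) (m : Multipartition r) (i : ℕ)
    (hK : 0 ≤ Kconst e a m i) :
    ∃ a' bt, IsBaseTuple e a m a' bt ∧
      bt i - bt (if i = 0 then e - 1 else i - 1) = Kconst e a m i + (if i = 0 then 2 else 1) := by
  unfold Kconst at hK ⊢
  simp only at hK ⊢
  set S1 : Set ℤ := {x : ℤ | ∃ a' bt, IsBaseTuple e a m a' bt ∧ bt i = x} with hS1
  have hB : sSup S1 = 0 := by
    by_cases hne : S1.Nonempty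
    · apply Int.csSup_of_not_bddAbove
      rintro ⟨M, hM⟩
      obtain ⟨x, a', bt, ⟨h1, h2⟩, h3⟩ := hne
      have hmem : x + (M - x + 1) ∈ S1 := by
        refine ⟨fun j => a' j + e * (M - x + 1), fun k => bt k + (M - x + 1), ⟨?_, ?_⟩, by simp only [h3]⟩
        · intro j
          have := dvd_add (h1 j) (dvd_mul_right (e : ℤ) (M - x + 1))
          have h5 : a' j + e * (M - x + 1) - a j = a' j - a j + e * (M - x + 1) := by ring
          rw [h5]; exact this
        · intro k hk j
          rw [level_shift he]
          rcases h2 k hk j with h | h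
          · left; rw [h]
          · right; rw [h]; ring
      have := hM hmem
      omega
    · rw [Set.not_nonempty_iff_eq_empty.1 hne]; simp
  rw [hB] at hK ⊢
  set S2 : Set ℤ := {x : ℤ | ∃ a' bt, IsBaseTuple e a m a' bt ∧ bt i = 0 ∧
    bt (if i = 0 then e - 1 else i - 1) = x} with hS2
  have hne : sInf S2 ∈ S2 := by
    have h0 : sInf S2 ≠ 0 := by
      intro h
      rw [h] at hK
      split_ifs at hK <;> omega
    apply Int.csInf_mem
    · by_contra h
      apply h0
      rw [Set.not_nonempty_iff_eq_empty.1 h]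
      exact Int.csInf_empty
    · by_contra h
      exact h0 (Int.csInf_of_not_bddBelow h)
  obtain ⟨a', bt, h1, h2, h3⟩ := hne
  refine ⟨a', bt, h1, ?_⟩
  rw [h2, h3]; ring

lemma bad_bound {e r : ℕ} (he : 2 ≤ e) (hr : 0 < r) (a : Fin r → ℤ) (i : ℕ) (hi : i < e)
    {lam m : Multipartition r} (hcore : IsMulticore e a m) (h : SameHub e a lam m)
    (hK : 0 ≤ Kconst e a m i) {j : Fin r} {x : ℤ} (hxi : (x + 1) % (e : ℤ) = (i : ℤ) % e)
    (hx : x ∈ betaSet (a j) (lam j)) (hx' : x + 1 ∉ betaSet (a j) (lam j)) :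
    Kconst e a m i + 1 ≤ (nodeCount e a lam 0 : ℤ) - nodeCount e a m 0 := by
  have hpos : (0 : ℤ) < e := by omega
  obtain ⟨a', bt, ⟨hdvd, hbt⟩, hKeq⟩ := K_base he hr a m i hK
  generalize Kconst e a m i = K at hK hKeq ⊢
  obtain ⟨N1, h1⟩ := exists_Bd lam
  obtain ⟨N2, h2⟩ := exists_Bd m
  obtain ⟨N, hN, hN'⟩ : ∃ N, Bd lam N ∧ Bd m N :=
    ⟨max N1 N2, h1 _ (le_max_left _ _), h2 _ (le_max_right _ _)⟩
  choose q hq using hdvd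
  set G : Fin r → ℤ → ℤ := fun j x => x / e + q j - bt (x % (e : ℤ)).toNat - 1 with hG
  -- sign of G
  have hlev : ∀ j x, (x ∈ betaSet (a j) (m j) → G j x ≤ 0) ∧ (x ∉ betaSet (a j) (m j) → 0 ≤ G j x) := by
    intro j x
    have e2 := Int.emod_nonneg x hpos.ne'
    have e3 := Int.emod_lt_of_pos x hpos
    have hl := core_level he (hcore j) (x % (e : ℤ)).toNat (x / e)
    rw [Int.toNat_of_nonneg e2, Int.ediv_mul_add_emod] at hl
    have hb := hbt (x % (e : ℤ)).toNat (by omega) j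
    have ha : a' j = a j + e * q j := by have := hq j; linarith
    rw [ha, level_shift he] at hb
    rw [hl]
    simp only [hG]
    constructor <;> intro h <;> omega
  -- T formula
  have hT : (nodeCount e a lam 0 : ℤ) - nodeCount e a m 0 =
      ∑ j, ∑ x ∈ Finset.Ico (a j - N - 1) (a j + N + 1),
        ((if x ∈ betaSet (a j) (lam j) then G j x else 0) -
          (if x ∈ betaSet (a j) (m j) then G j x else 0)) := by
    have hbsum : ∑ j, ∑ b ∈ Finset.range (N + 1), bt (bet (a j) (lam j) b % (e : ℤ)).toNat =
        ∑ j, ∑ b ∈ Finset.range (N + 1), bt (bet (a j) (m j) b % (e : ℤ)).toNat := by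
      rw [← RR_sum he, ← RR_sum he]
      exact Finset.sum_congr rfl fun k _ => by rw [RR_eq he a hN hN' h]
    rw [nodeCount_eq he a hN, nodeCount_eq he a hN']
    simp only [Finset.sum_sub_distrib]
    simp only [← sum_bet (hN _).1 (hN _).2, ← sum_bet (hN' _).1 (hN' _).2]
    simp only [hG, Finset.sum_sub_distrib, Finset.sum_add_distrib, sub_zero]
    linarith
  have hterm : ∀ j x, 0 ≤ ((if x ∈ betaSet (a j) (lam j) then G j x else 0) -
          (if x ∈ betaSet (a j) (m j) then G j x else 0)) := by
    intro j x
    have := hlev j x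
    by_cases c1 : x ∈ betaSet (a j) (lam j) <;> by_cases c2 : x ∈ betaSet (a j) (m j) <;>
      simp only [c1, c2, if_true, if_false] <;> simp only [c2] at this <;> grind
  rw [hT]
  refine le_trans ?_ (Finset.single_le_sum (f := fun j => ∑ x ∈ Finset.Ico (a j - N - 1) (a j + N + 1),
        ((if x ∈ betaSet (a j) (lam j) then G j x else 0) -
          (if x ∈ betaSet (a j) (m j) then G j x else 0)))
    (fun j _ => Finset.sum_nonneg fun x _ => hterm j x) (Finset.mem_univ j))
  have hle := beta_le (hN j).2 hx
  have hge : a j - N - 1 < x + 1 := by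
    by_contra h3
    exact hx' (mem_beta_low (hN j).1 (by omega))
  have hsub : ({x, x + 1} : Finset ℤ) ⊆ Finset.Ico (a j - N - 1) (a j + N + 1) := by
    intro y hy
    simp only [Finset.mem_insert, Finset.mem_singleton] at hy
    rw [Finset.mem_Ico]
    omega
  refine le_trans ?_ (Finset.sum_le_sum_of_subset_of_nonneg hsub fun x _ _ => hterm j x)
  rw [Finset.sum_pair (by omega), if_pos hx, if_neg hx']
  have hGG : G j x - G j (x + 1) = K + 1 := by
    simp only [hG]
    have e0 := Int.emod_add_mul_ediv (x + 1) e
    rw [hxi, Int.emod_eq_of_lt (by omega) (by omega)] at e0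
    have e1 : (x + 1) % (e : ℤ) = i := by rw [hxi, Int.emod_eq_of_lt (by omega) (by omega)]
    rw [e1]
    by_cases hi0 : i = 0
    · have d : x / (e : ℤ) = (x + 1) / e - 1 := by
        rw [Int.ediv_eq_iff_of_pos hpos]
        subst hi0
        constructor <;> push_cast at e0 <;> nlinarith
      have d2 : x % (e : ℤ) = e - 1 := by
        have := Int.emod_add_mul_ediv x e
        rw [d] at this
        subst hi0
        push_cast at e0
        linarith
      rw [d, d2]
      rw [if_pos hi0, if_pos hi0] at hKeq
      have : ((e : ℤ) - 1).toNat = e - 1 := by omega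
      rw [this, Int.toNat_natCast]
      linarith
    · have d : x / (e : ℤ) = (x + 1) / e := by
        rw [Int.ediv_eq_iff_of_pos hpos]
        have : (1 : ℤ) ≤ i := by omega
        have : (i : ℤ) < e := by omega
        constructor <;> nlinarith
      have d2 : x % (e : ℤ) = i - 1 := by
        have := Int.emod_add_mul_ediv x e
        rw [d] at this
        linarith
      rw [d, d2]
      rw [if_neg hi0, if_neg hi0] at hKeq
      have : ((i : ℤ) - 1).toNat = i - 1 := by omega
      rw [this, Int.toNat_natCast]
      linarith
  have t1 := hlev j x
  have t2 := hlev j (x + 1)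
  split_ifs with c1 c2 c2
  · have := t1.1 c1; linarith
  · have := t1.1 c1; have := t2.2 c2; linarith
  · linarith
  · have := t2.2 c2; linarith

/-- Lemma 5.5: fix `i ∈ {0,…,e−1}` and let `B` be a block with
core block `C` such that `w(B) ≤ w(C) + K_i(C)·r` and `δ_i(B) ≥ 0`. If `λ, μ ∈ B`
with `λ > μ` lexicographically, then `Φ_i(λ) > Φ_i(μ)` lexicographically. -/
theorem stmt_13 {e r : ℕ} (he : 2 ≤ e) (hr : 0 < r) (a : Fin r → ℤ)
    (i : ℕ) (hi : i < e)
    (mu0 : Multipartition r) (hmu0core : IsMulticore e a mu0)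
    (hmu0min : MinimalWeight e a mu0)
    (lam mu : Multipartition r)
    (hlamB : SameHub e a lam mu0) (hmuB : SameHub e a mu mu0)
    (hsize : msize lam = msize mu)
    (hw : weight e a lam ≤ weight e a mu0 + (Kconst e a mu0 i : ℚ) * (r : ℚ))
    (hdel : 0 ≤ hub e a lam (i : ℤ))
    (lam' mu' : Multipartition r)
    (hlam' : ∀ j, betaSet (a j) (lam' j) = phiMap e i '' betaSet (a j) (lam j))
    (hmu' : ∀ j, betaSet (a j) (mu' j) = phiMap e i '' betaSet (a j) (mu j))
    (hgt : lexGT lam mu) :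
    lexGT lam' mu' := by
  have hr' : (0 : ℚ) < r := by exact_mod_cast hr
  have hdec := weight_diff he a hlamB
  have hmin := hmu0min lam (fun k => (hlamB k).symm)
  have hK : 0 ≤ Kconst e a mu0 i := by
    have : (0 : ℚ) ≤ (Kconst e a mu0 i : ℚ) * r := by linarith
    exact_mod_cast nonneg_of_mul_nonneg_left this hr'
  have hTl : (nodeCount e a lam 0 : ℤ) - nodeCount e a mu0 0 ≤ Kconst e a mu0 i := by
    have : (((nodeCount e a lam 0 : ℤ) - nodeCount e a mu0 0 : ℤ) : ℚ) * r
        ≤ (Kconst e a mu0 i : ℚ) * r := by linarith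
    exact_mod_cast le_of_mul_le_mul_right this hr'
  have hTm : (nodeCount e a mu 0 : ℤ) - nodeCount e a mu0 0 ≤ Kconst e a mu0 i := by
    have s1 := size_T he a hlamB
    have s2 := size_T he a hmuB
    rw [hsize] at s1
    have hpos : (e : ℤ) ≠ 0 := by omega
    have : (nodeCount e a mu 0 : ℤ) - nodeCount e a mu0 0 =
        (nodeCount e a lam 0 : ℤ) - nodeCount e a mu0 0 := by
      apply mul_left_cancel₀ hpos
      linarith
    rw [this]; exact hTl
  obtain ⟨j, hj, k, hk, hlt⟩ := hgt
  obtain ⟨x, hx, hx', hxy⟩ := lex_fwd (aj := a j) hk hlt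
  obtain ⟨z, hz, hz', hzy⟩ := phi_order he hi (S := betaSet (a j) (lam j))
    (T := betaSet (a j) (mu j))
    (fun y hy hyS => by
      by_contra hc
      have := bad_bound he hr a i hi hmu0core hlamB hK hy hyS hc
      omega)
    (fun y hy hyS => by
      by_contra hc
      have := bad_bound he hr a i hi hmu0core hmuB hK hy hyS hc
      omega) hx hx' hxy
  refine ⟨j, fun j' hj' => ?_, ?_⟩
  · apply part_eq_of_beta (aj := a j')
    rw [hlam', hmu', beta_eq_of_part (hj j' hj')]
  · rw [← hlam', ← hmu'] at *
    exact lex_bwd hz hz' hzy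

end AK
end

section
/- Fix i ∈ ℤ/eℤ. Let λ be a multipartition with no addable nodes of residue i and exactly δ removable nodes of residue i, listed as A_1 < A_2 < … < A_δ with respect to the order on nodes. Let σ be a permutation of {1,…,δ} with length k (the number of inversions of σ), and remove the removable i-nodes of λ one at a time in the order A_{σ(1)}, A_{σ(2)}, …, A_{σ(δ)}, writing λ^{−σ(m)} for the multipartition obtained after removing the first m of these nodes (λ^{−σ(0)} = λ). Then Σ_{m=1}^{δ} N_{A_{σ(m)}}(λ^{−σ(m−1)}) = δ(δ−1)/2 − 2k. -/
/-!
Combinatorial framework for multipartitions, residues, β-sets, abacus levels,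
weights, hubs, core blocks and Scopes-type moves, following Fayers and the paper.
Rows and columns of Young diagrams are indexed from 0, so the node in row `b`
and column `c` (0-based) of component `j` has residue `a j + c - b` mod `e`.
-/

open scoped Classical

namespace AK

theorem part_cases {r : ℕ} (lam mu : Multipartition r) (R : Set (Node r))
    (hR : ∀ y ∈ R, (lam y.2.2).Removable y.1 y.2.1)
    (hd : ∀ y, y ∈ diag mu ↔ y ∈ diag lam ∧ y ∉ R) (b : ℕ) (j : Fin r) :
    ((mu j).part b = (lam j).part b ∧ ∀ c, (b, c, j) ∉ R) ∨
    ((mu j).part b + 1 = (lam j).part b ∧ (b, (mu j).part b, j) ∈ R) := by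
  have hd' : ∀ c, c < (mu j).part b ↔ c < (lam j).part b ∧ (b, c, j) ∉ R :=
    fun c => hd (b, c, j)
  have hR' : ∀ c, (b, c, j) ∈ R → (lam j).part b = c + 1 := fun c h => (hR _ h).1
  by_cases h : ∃ c, (b, c, j) ∈ R
  · right
    obtain ⟨c, hc⟩ := h
    have h1 := hR' c hc
    have h2 : (mu j).part b = c := by
      have h3 : ¬ c < (mu j).part b := fun h => ((hd' c).1 h).2 hc
      rcases Nat.eq_zero_or_pos c with h0 | h0
      · omega
      · have h4 : c - 1 < (mu j).part b := by
          rw [hd']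
          refine ⟨by omega, fun h => ?_⟩
          have := hR' _ h
          omega
        omega
    rw [h2]
    exact ⟨h1.symm, hc⟩
  · left
    push Not at h
    refine ⟨?_, h⟩
    have h1 := hd' ((mu j).part b)
    have h2 := hd' ((lam j).part b)
    have h3 := h ((mu j).part b)
    simp [h3] at h1
    simp at h2
    omega

theorem emod_ne {e : ℕ} (he : 2 ≤ e) (x y i : ℤ) (hx : x % (e : ℤ) = i % e)
    (hy : y % (e : ℤ) = i % e) (h : x = y + 1) : False := by
  have h1 : (e : ℤ) ∣ x - y := 
    Int.ModEq.dvd (show y ≡ x [ZMOD e] from hy.trans hx.symm)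
  rw [h, add_sub_cancel_left] at h1
  have := Int.le_of_dvd one_pos h1
  omega

theorem addable_iff {r : ℕ} (e : ℕ) (a : Fin r → ℤ) (i : ℤ)
    (lam mu : Multipartition r) (R : Set (Node r))
    (hnoadd : ∀ y : Node r, ¬((lam y.2.2).Addable y.1 y.2.1 ∧
      (a y.2.2 + (y.2.1 : ℤ) - (y.1 : ℤ)) % (e : ℤ) = i % e))
    (hR : ∀ y ∈ R, (lam y.2.2).Removable y.1 y.2.1)
    (hRi : ∀ y ∈ R, (a y.2.2 + (y.2.1 : ℤ) - (y.1 : ℤ)) % (e : ℤ) = i % e)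
    (hd : ∀ y, y ∈ diag mu ↔ y ∈ diag lam ∧ y ∉ R) (y : Node r) :
    ((mu y.2.2).Addable y.1 y.2.1 ∧
      (a y.2.2 + (y.2.1 : ℤ) - (y.1 : ℤ)) % (e : ℤ) = i % e) ↔ y ∈ R := by
  obtain ⟨b, c, j⟩ := y
  constructor
  · rintro ⟨⟨h1, h2⟩, h3⟩
    dsimp only at h1 h2 h3
    rcases part_cases lam mu R hR hd b j with ⟨h4, h5⟩ | ⟨h4, h5⟩
    · exfalso
      apply hnoadd (b, c, j)
      refine ⟨⟨by dsimp only; omega, ?_⟩, h3⟩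
      dsimp only
      rcases part_cases lam mu R hR hd (b-1) j with ⟨h6, h7⟩ | ⟨h6, h7⟩ <;> omega
    · rwa [h1] at h5
  · intro h
    refine ⟨⟨?_, ?_⟩, hRi _ h⟩
    all_goals
      dsimp only
      have h1 := hR _ h
      obtain ⟨h1, h1'⟩ := h1
      dsimp only at h1 h1'
      rcases part_cases lam mu R hR hd b j with ⟨h4, h5⟩ | ⟨h4, h5⟩
      · exact absurd h (h5 c)
    · omega
    · rcases Nat.eq_zero_or_pos b with h0 | h0
      · exact Or.inl h0
      right
      have ha := (lam j).antitone (Nat.sub_le b 1)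
      rcases part_cases lam mu R hR hd (b-1) j with ⟨h6, h7⟩ | ⟨h6, h7⟩
      · omega
      · obtain ⟨h8, h9⟩ := hR _ h7
        dsimp only at h8 h9
        rw [Nat.sub_add_cancel h0] at h9
        omega

theorem removable_iff {r : ℕ} (e : ℕ) (he : 2 ≤ e) (a : Fin r → ℤ) (i : ℤ)
    (lam mu : Multipartition r) (R : Set (Node r))
    (hR : ∀ y ∈ R, (lam y.2.2).Removable y.1 y.2.1)
    (hRi : ∀ y ∈ R, (a y.2.2 + (y.2.1 : ℤ) - (y.1 : ℤ)) % (e : ℤ) = i % e)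
    (hd : ∀ y, y ∈ diag mu ↔ y ∈ diag lam ∧ y ∉ R) (y : Node r) :
    ((mu y.2.2).Removable y.1 y.2.1 ∧
      (a y.2.2 + (y.2.1 : ℤ) - (y.1 : ℤ)) % (e : ℤ) = i % e) ↔
    ((lam y.2.2).Removable y.1 y.2.1 ∧
      (a y.2.2 + (y.2.1 : ℤ) - (y.1 : ℤ)) % (e : ℤ) = i % e) ∧ y ∉ R := by
  obtain ⟨b, c, j⟩ := y
  constructor
  · rintro ⟨⟨h1, h2⟩, h3⟩
    dsimp only at h1 h2 h3
    refine ⟨⟨⟨?_, ?_⟩, h3⟩, ((hd (b, c, j)).1 (show c < (mu j).part b by omega)).2⟩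
    · dsimp only
      rcases part_cases lam mu R hR hd b j with ⟨h4, h5⟩ | ⟨h4, h5⟩
      · omega
      · exfalso
        have h6 := hRi _ h5
        dsimp only at h6
        refine emod_ne he _ _ i h6 h3 ?_
        rw [h1]; push_cast; ring
    · dsimp only
      rcases part_cases lam mu R hR hd (b+1) j with ⟨h4, h5⟩ | ⟨h4, h5⟩
      · omega
      · by_contra hlt
        have h6 := hRi _ h5
        dsimp only at h6
        refine emod_ne he _ _ i h3 h6 ?_
        rw [show (mu j).part (b+1) = c by omega]; push_cast; ring
  · rintro ⟨⟨⟨h1, h2⟩, h3⟩, h⟩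
    dsimp only at h1 h2 h3
    refine ⟨⟨?_, ?_⟩, h3⟩
    · dsimp only
      rcases part_cases lam mu R hR hd b j with ⟨h4, h5⟩ | ⟨h4, h5⟩
      · omega
      · rw [show (mu j).part b = c by omega] at h5
        exact absurd h5 h
    · dsimp only
      rcases part_cases lam mu R hR hd (b+1) j with ⟨h4, h5⟩ | ⟨h4, h5⟩ <;> omega

theorem above_iff {r d : ℕ} (A : Fin d → Node r)
    (hmono : ∀ p q : Fin d, p < q → NodeLT (A p) (A q)) (p q : Fin d) :
    NodeAbove (A p) (A q) ↔ q < p := by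
  constructor
  · intro h
    by_contra hn
    rcases (not_lt.1 hn).lt_or_eq with h1 | h1
    · have h2 := hmono _ _ h1
      unfold NodeLT at h2
      unfold NodeAbove at h h2
      rcases h with h | h <;> rcases h2 with h2 | h2
      · exact lt_asymm h h2
      · rw [h2.1] at h; exact lt_irrefl _ h
      · rw [h.1] at h2; exact lt_irrefl _ h2
      · omega
    · subst h1
      unfold NodeAbove at h
      simp at h
  · exact hmono q p

theorem A_inj {r d : ℕ} (A : Fin d → Node r)
    (hmono : ∀ p q : Fin d, p < q → NodeLT (A p) (A q)) : Function.Injective A := by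
  intro p q h
  have h1 := above_iff A hmono p q
  have h2 := above_iff A hmono q p
  have h3 := above_iff A hmono p p
  rw [h] at h1 h2 h3
  have h4 : ¬ NodeAbove (A q) (A q) := fun x => lt_irrefl _ (h3.1 x)
  exact le_antisymm (not_lt.1 fun x => h4 (h1.2 x)) (not_lt.1 fun x => h4 (h2.2 x))

theorem ncard_aux {r d : ℕ} (B : Fin d → Node r) (hB : Function.Injective B)
    (P : Fin d → Prop) [DecidablePred P] (S : Set (Node r)) (hS : ∀ y, y ∈ S ↔ ∃ m, P m ∧ B m = y) :
    S.ncard = (Finset.univ.filter P).card := by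
  have : S = B '' {m | P m} := by
    ext y; rw [hS]; rfl
  rw [this, Set.ncard_image_of_injective _ hB, ← Set.ncard_coe_finset]
  congr 1
  ext; simp

theorem seq_diag {r d : ℕ} (B : Fin d → Node r) (lamSeq : ℕ → Multipartition r)
    (hstep : ∀ m : Fin d,
      diag (lamSeq ((m : ℕ) + 1)) = diag (lamSeq (m : ℕ)) \ {B m}) (m : ℕ) (hm : m ≤ d) (y) :
    y ∈ diag (lamSeq m) ↔ y ∈ diag (lamSeq 0) ∧ y ∉ {z | ∃ q : Fin d, (q : ℕ) < m ∧ B q = z} := by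
  induction m with
  | zero => simp
  | succ m ih =>
    have h := hstep ⟨m, hm⟩
    dsimp only at h
    rw [h, Set.mem_sdiff, ih (by omega), and_assoc]
    apply and_congr_right
    intro _
    simp only [Set.mem_ofPred_eq, not_exists, not_and, Set.mem_singleton_iff]
    constructor
    · rintro ⟨h1, h2⟩ q hq h3
      rcases Nat.lt_succ_iff_lt_or_eq.1 hq with h4 | h4
      · exact h1 q h4 h3
      · have : q = ⟨m, hm⟩ := Fin.ext h4
        subst this
        exact h2 h3.symm
    · intro h1
      exact ⟨fun q hq => h1 q (by omega), fun h2 => h1 ⟨m, hm⟩ (by simp) h2.symm⟩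

theorem card_lt_pairs (d : ℕ) :
    (Finset.univ.filter (fun p : Fin d × Fin d => p.1 < p.2)).card = d * (d - 1) / 2 := by
  rw [← Finset.sum_range_id_mul_two, Nat.mul_div_cancel _ (by norm_num),
    ← Fin.sum_univ_eq_sum_range (fun x => x) d,
    Finset.card_filter, Fintype.sum_prod_type_right]
  apply Finset.sum_congr rfl
  intro m _
  dsimp only
  rw [← Finset.card_filter, Finset.filter_gt_eq_Iio, Fin.card_Iio]

theorem perm_sum (d : ℕ) (σ : Equiv.Perm (Fin d)) :
    ∑ m : Fin d, (((Finset.univ.filter (fun q : Fin d => q < m ∧ σ q < σ m)).card : ℤ) -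
      ((Finset.univ.filter (fun q : Fin d => ¬ q < m ∧ σ q < σ m)).card : ℤ)) =
      ((d * (d - 1) / 2 : ℕ) : ℤ) - 2 * (permLength d σ : ℤ) := by
  have h1 : (∑ m : Fin d, (Finset.univ.filter (fun q : Fin d => ¬ q < m ∧ σ q < σ m)).card)
      = permLength d σ := by
    unfold permLength
    rw [Finset.card_filter, Fintype.sum_prod_type]
    apply Finset.sum_congr rfl
    intro m _
    rw [Finset.card_filter]
    apply Finset.sum_congr rfl
    intro q _
    dsimp only
    congr 1
    apply propext
    constructor
    · rintro ⟨h, h'⟩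
      refine ⟨lt_of_le_of_ne (not_lt.1 h) ?_, h'⟩
      rintro rfl
      exact lt_irrefl _ h'
    · rintro ⟨h, h'⟩
      exact ⟨not_lt.2 h.le, h'⟩
  have h2 : (∑ m : Fin d, (Finset.univ.filter (fun q : Fin d => q < m ∧ σ q < σ m)).card)
      + permLength d σ = d * (d - 1) / 2 := by
    rw [← card_lt_pairs]
    unfold permLength
    rw [Finset.card_filter, Finset.card_filter, Fintype.sum_prod_type_right,
      Fintype.sum_prod_type_right, ← Finset.sum_add_distrib]
    apply Finset.sum_congr rfl
    intro m _
    rw [Finset.card_filter, ← Finset.sum_add_distrib]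
    apply Finset.sum_congr rfl
    intro q _
    dsimp only
    by_cases hq : q < m
    · have hne : σ q ≠ σ m := fun h => hq.ne (σ.injective h)
      rcases lt_or_gt_of_ne hne with h | h
      · simp [hq, h, h.not_gt]
      · simp [hq, h, h.not_gt]
    · simp [hq]
  rw [Finset.sum_sub_distrib, ← h2]
  push_cast [← h1]
  ring

/-- degree-shift computation from the proof of Proposition 5.4:
if `λ` has no addable `i`-nodes and exactly `δ` removable `i`-nodes
`A_1 < ⋯ < A_δ`, and they are removed in the order given by a permutation `σ`
of length `k`, then the total shift is `δ(δ−1)/2 − 2k`. -/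
theorem stmt_14 {e r : ℕ} (he : 2 ≤ e) (hr : 0 < r) (a : Fin r → ℤ)
    (lam : Multipartition r) (i : ℤ)
    (hnoadd : ∀ y : Node r, ¬((lam y.2.2).Addable y.1 y.2.1 ∧
      (a y.2.2 + (y.2.1 : ℤ) - (y.1 : ℤ)) % (e : ℤ) = i % e))
    (d : ℕ) (A : Fin d → Node r)
    (hmono : ∀ p q : Fin d, p < q → NodeLT (A p) (A q))
    (hrange : Set.range A = {y : Node r | (lam y.2.2).Removable y.1 y.2.1 ∧
      (a y.2.2 + (y.2.1 : ℤ) - (y.1 : ℤ)) % (e : ℤ) = i % e})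
    (σ : Equiv.Perm (Fin d)) (k : ℕ) (hk : permLength d σ = k)
    (lamSeq : ℕ → Multipartition r) (h0 : lamSeq 0 = lam)
    (hstep : ∀ m : Fin d,
      diag (lamSeq ((m : ℕ) + 1)) = diag (lamSeq (m : ℕ)) \ {A (σ m)}) :
    ∑ m : Fin d, Nfac e a (lamSeq (m : ℕ)) i (A (σ m)) =
      ((d * (d - 1) / 2 : ℕ) : ℤ) - 2 * (k : ℤ) := by
  subst hk
  rw [← perm_sum]
  apply Finset.sum_congr rfl
  intro m _
  have hAi := A_inj A hmono
  have hB : Function.Injective (fun q => A (σ q)) := hAi.comp σ.injective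
  have hmem : ∀ p, A p ∈ {y : Node r | (lam y.2.2).Removable y.1 y.2.1 ∧
      (a y.2.2 + (y.2.1 : ℤ) - (y.1 : ℤ)) % (e : ℤ) = i % e} :=
    fun p => hrange ▸ Set.mem_range_self p
  have hd := seq_diag (fun q => A (σ q)) lamSeq hstep m m.2.le
  rw [h0] at hd
  have hR : ∀ y ∈ {z | ∃ q : Fin d, (q : ℕ) < m ∧ A (σ q) = z},
      (lam y.2.2).Removable y.1 y.2.1 := by
    rintro _ ⟨q, _, rfl⟩
    exact (hmem _).1
  have hRi : ∀ y ∈ {z | ∃ q : Fin d, (q : ℕ) < m ∧ A (σ q) = z},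
      (a y.2.2 + (y.2.1 : ℤ) - (y.1 : ℤ)) % (e : ℤ) = i % e := by
    rintro _ ⟨q, _, rfl⟩
    exact (hmem _).2
  unfold Nfac
  congr 2
  · apply ncard_aux _ hB
    intro y
    rw [Set.mem_ofPred_eq, ← and_assoc, addable_iff e a i lam _ _ hnoadd hR hRi hd]
    constructor
    · rintro ⟨⟨q, hq, rfl⟩, h⟩
      exact ⟨q, ⟨hq, (above_iff A hmono _ _).1 h⟩, rfl⟩
    · rintro ⟨q, ⟨hq, h⟩, rfl⟩
      exact ⟨⟨q, hq, rfl⟩, (above_iff A hmono _ _).2 h⟩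
  · apply ncard_aux _ hB
    intro y
    rw [Set.mem_ofPred_eq, ← and_assoc, removable_iff e he a i lam _ _ hR hRi hd]
    constructor
    · rintro ⟨⟨h1, h2⟩, h⟩
      have h3 : y ∈ Set.range A := by rw [hrange]; exact h1
      obtain ⟨p, rfl⟩ := h3
      obtain ⟨q, rfl⟩ := σ.surjective p
      exact ⟨q, ⟨fun hq => h2 ⟨q, hq, rfl⟩, (above_iff A hmono _ _).1 h⟩, rfl⟩
    · rintro ⟨q, ⟨hq, h⟩, rfl⟩
      refine ⟨⟨hmem _, ?_⟩, (above_iff A hmono _ _).2 h⟩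
      rintro ⟨q', hq', h'⟩
      have := hB h'
      subst this
      exact hq hq'

end AK
end
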